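/- Let p ∈ (0,1], λ ∈ (0,1), d ≥ 2, and define F̄(w) = λ [ (1−(1−p)λ) / ( pλ^d + (1−(1−p)λ−pλ^d) e^{(d−1)(1−(1−p)λ)w} ) ]^{1/(d−1)} for w ≥ 0. Then F̄ satisfies the ODE F̄'(w) = λ(p F̄(w)^d + (1−p) F̄(w)) − F̄(w) with F̄(0) = λ. -/

import Mathlib

open Real Set

/-!
The equation `u' = c u ^ (q + 1) - a u` is a Bernoulli equation: `v = u ^ q` satisfies the logistic
equation `v' = q v (c v - a)`. Normalising `v` by its initial value gives the logistic equation
`G' = q G (b G - a)`, `G 0 = 1`, with `b = c u₀ ^ q`, which separation of variables solves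
explicitly, and then `u = u₀ G ^ (1 / q)`. The workload equation is the case `q = d - 1`, `c = λ p`,
`a = 1 - (1 - p) λ`, so that `b = p λ ^ d`. The solution is global because `0 ≤ b ≤ a`, which keeps
the denominator of `G` positive.
-/

section Logistic

variable {a b r w : ℝ}

/-- The solution `G` of the logistic equation `G' = r G (b G - a)` with `G 0 = 1`. It has the junk
value `0` where the denominator vanishes, i.e. where the true solution blows up. -/
noncomputable def logisticSolution (a b r w : ℝ) : ℝ :=
  a / (b + (a - b) * exp (r * a * w))

theorem logisticSolution_zero (ha : a ≠ 0) : logisticSolution a b r 0 = 1 := by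
  simp [logisticSolution, ha]

theorem logisticSolution_pos (ha : 0 < a) (hb : 0 ≤ b) (hba : b ≤ a) :
    0 < logisticSolution a b r w := by
  refine div_pos ha ?_
  rcases hba.eq_or_lt with rfl | hlt
  · simpa using ha
  · exact add_pos_of_nonneg_of_pos hb (mul_pos (sub_pos.2 hlt) (exp_pos _))

theorem hasDerivAt_logisticSolution (hw : b + (a - b) * exp (r * a * w) ≠ 0) :
    HasDerivAt (logisticSolution a b r)
      (r * logisticSolution a b r w * (b * logisticSolution a b r w - a)) w := by
  have hexp : HasDerivAt (fun x ↦ exp (r * a * x)) (exp (r * a * w) * (r * a)) w := by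
    simpa using ((hasDerivAt_id w).const_mul (r * a)).exp
  have hquot := (hasDerivAt_const w a).fun_div ((hexp.const_mul (a - b)).const_add b) hw
  refine hquot.congr_deriv ?_
  simp only [logisticSolution]
  generalize exp (r * a * w) = E at hw ⊢
  field_simp
  ring

end Logistic

section Bernoulli

variable {a c q u₀ w : ℝ}

/-- The solution `u` of the Bernoulli equation `u' = c u ^ (q + 1) - a u` with `u 0 = u₀`, obtained
from the logistic solution proportional to `u ^ q`. The formula is meant for `q ≠ 0` and `0 < u₀`:
at `q = 0` it has the junk exponent `1 / 0 = 0`. -/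
noncomputable def bernoulliSolution (a c q u₀ w : ℝ) : ℝ :=
  u₀ * logisticSolution a (c * u₀ ^ q) q w ^ (1 / q)

theorem bernoulliSolution_zero (ha : a ≠ 0) : bernoulliSolution a c q u₀ 0 = u₀ := by
  simp [bernoulliSolution, logisticSolution_zero ha]

theorem bernoulliSolution_rpow (hq : q ≠ 0) (hu₀ : 0 ≤ u₀)
    (hG : 0 ≤ logisticSolution a (c * u₀ ^ q) q w) :
    bernoulliSolution a c q u₀ w ^ q = u₀ ^ q * logisticSolution a (c * u₀ ^ q) q w := by
  rw [bernoulliSolution, mul_rpow hu₀ (rpow_nonneg hG _), one_div, rpow_inv_rpow hG hq]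

theorem hasDerivAt_bernoulliSolution (hq : q ≠ 0) (hu₀ : 0 < u₀)
    (hG : 0 < logisticSolution a (c * u₀ ^ q) q w) :
    HasDerivAt (bernoulliSolution a c q u₀)
      (c * bernoulliSolution a c q u₀ w ^ (q + 1) - a * bernoulliSolution a c q u₀ w) w := by
  have hu : 0 < bernoulliSolution a c q u₀ w := mul_pos hu₀ (rpow_pos_of_pos hG _)
  have hderiv := ((hasDerivAt_logisticSolution (div_ne_zero_iff.1 hG.ne').2).rpow_const
    (p := 1 / q) (Or.inl hG.ne')).const_mul u₀
  refine hderiv.congr_deriv ?_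
  rw [rpow_add_one hu.ne', bernoulliSolution_rpow hq hu₀.le hG.le, rpow_sub_one hG.ne',
    bernoulliSolution]
  field_simp

end Bernoulli

theorem mul_rpow_le_one_sub_one_sub_mul {d p l : ℝ} (hd : 0 ≤ d) (hp : p ∈ Icc 0 1)
    (hl : l ∈ Icc 0 1) : p * l ^ d ≤ 1 - (1 - p) * l :=
  calc p * l ^ d ≤ p := mul_le_of_le_one_right hp.1 (rpow_le_one hl.1 hl.2 hd)
    _ ≤ 1 - (1 - p) * l := by linarith [mul_le_of_le_one_right (sub_nonneg.2 hp.2) hl.2]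

theorem stmt_16_general (d : ℝ) (hd : 0 ≤ d) (hd1 : d ≠ 1) (p l : ℝ)
    (hp : p ∈ Icc (0 : ℝ) 1) (hl : l ∈ Ioo (0 : ℝ) 1) (F : ℝ → ℝ)
    (hF : F = fun w : ℝ ↦ l *
      ((1 - (1 - p) * l) /
        (p * l ^ d + (1 - (1 - p) * l - p * l ^ d) *
          exp ((d - 1) * (1 - (1 - p) * l) * w))) ^ (1 / (d - 1))) :
    F 0 = l ∧ ∀ w : ℝ, HasDerivAt F (l * (p * F w ^ d + (1 - p) * F w) - F w) w := by
  have ha : 0 < 1 - (1 - p) * l := by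
    linarith [mul_le_of_le_one_left hl.1.le (sub_le_self 1 hp.1), hl.2]
  have hb : l * p * l ^ (d - 1) = p * l ^ d := by
    rw [rpow_sub_one hl.1.ne']
    field_simp [hl.1.ne']
  obtain rfl : F = bernoulliSolution (1 - (1 - p) * l) (l * p) (d - 1) l := by
    funext w
    simp only [hF, bernoulliSolution, logisticSolution, hb]
  refine ⟨bernoulliSolution_zero ha.ne', fun w ↦ ?_⟩
  have hG : 0 < logisticSolution (1 - (1 - p) * l) (l * p * l ^ (d - 1)) (d - 1) w := by
    rw [hb]
    exact logisticSolution_pos ha (mul_nonneg hp.1 (rpow_nonneg hl.1.le d))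
      (mul_rpow_le_one_sub_one_sub_mul hd hp (Ioo_subset_Icc_self hl))
  refine (hasDerivAt_bernoulliSolution (sub_ne_zero.2 hd1) hl.1 hG).congr_deriv ?_
  rw [sub_add_cancel]
  ring

theorem stmt_16 (d : ℕ) (hd : 2 ≤ d) (p l : ℝ)
    (hp : p ∈ Set.Ioc (0:ℝ) 1) (hl : l ∈ Set.Ioo (0:ℝ) 1)
    (F : ℝ → ℝ)
    (hF : F = fun w : ℝ => l *
      ((1 - (1 - p) * l) /
        (p * l ^ d + (1 - (1 - p) * l - p * l ^ d) *
          Real.exp (((d:ℝ) - 1) * (1 - (1 - p) * l) * w))) ^ ((1:ℝ) / ((d:ℝ) - 1))) :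
    F 0 = l ∧
    ∀ w : ℝ, 0 ≤ w →
      HasDerivAt F (l * (p * F w ^ d + (1 - p) * F w) - F w) w := by
  have h := stmt_16_general d d.cast_nonneg (mod_cast (by omega : d ≠ 1)) p l
    (Ioc_subset_Icc_self hp) hl F (by simpa only [rpow_natCast] using hF)
  exact ⟨h.1, fun w _ ↦ by simpa only [rpow_natCast] using h.2 w⟩
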